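/- For the β-power divergence with β ≠ 0, −1, if q₁(a) = c·q₀(a) for a constant c > 0, then d_β(q₀, q₁) = ∑_a q₀(a)^{β+1} · [ (c^{β+1} − 1)/(β+1) − (c^β − 1)/β ]. In particular, d_β(q₀,q₁) need not vanish when c ≠ 1 (the β-power divergence is not invariant under policy equivalence): the bracketed factor is strictly positive for every c > 0 with c ≠ 1. -/

import Mathlib

open Finset

lemma beta_factor_hasDerivAt (β : ℝ) (hβ0 : β ≠ 0) (hβ1 : β + 1 ≠ 0) (x : ℝ) (hx : 0 < x) :
    HasDerivAt (fun x : ℝ => (x ^ (β + 1) - 1) / (β + 1) - (x ^ β - 1) / β)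
      (x ^ (β - 1) * (x - 1)) x := by
  have h1 := ((Real.hasDerivAt_rpow_const (x := x) (p := β + 1) (Or.inl hx.ne')).sub_const 1).div_const (β + 1)
  have h2 := ((Real.hasDerivAt_rpow_const (x := x) (p := β) (Or.inl hx.ne')).sub_const 1).div_const β
  refine (h1.sub h2).congr_deriv ?_
  rw [mul_div_cancel_left₀ _ hβ1, mul_div_cancel_left₀ _ hβ0]
  have h3 : x ^ (β + 1 - 1) = x ^ (β - 1) * x := by
    rw [← Real.rpow_add_one hx.ne']
    congr 1
    ring
  rw [h3]
  ring

lemma beta_factor_pos (β c : ℝ) (hβ0 : β ≠ 0) (hβ1 : β + 1 ≠ 0) (hc : 0 < c) (hne : c ≠ 1) :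
    0 < (c ^ (β + 1) - 1) / (β + 1) - (c ^ β - 1) / β := by
  have key := beta_factor_hasDerivAt β hβ0 hβ1
  set f := fun x : ℝ => (x ^ (β + 1) - 1) / (β + 1) - (x ^ β - 1) / β with hf
  have f1 : f 1 = 0 := by simp [hf]
  change 0 < f c
  rw [← f1]
  rcases lt_or_gt_of_ne hne with h | h
  · have hanti : StrictAntiOn f (Set.Icc c 1) := by
      refine strictAntiOn_of_deriv_neg (convex_Icc c 1) ?_ ?_
      · intro x hx
        exact (key x (hc.trans_le hx.1)).continuousAt.continuousWithinAt
      · intro x hx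
        rw [interior_Icc] at hx
        have hx0 : 0 < x := hc.trans hx.1
        rw [(key x hx0).deriv]
        exact mul_neg_of_pos_of_neg (Real.rpow_pos_of_pos hx0 _) (by linarith [hx.2])
    exact hanti ⟨le_rfl, h.le⟩ ⟨h.le, le_rfl⟩ h
  · have hmono : StrictMonoOn f (Set.Icc 1 c) := by
      refine strictMonoOn_of_deriv_pos (convex_Icc 1 c) ?_ ?_
      · intro x hx
        exact (key x (one_pos.trans_le hx.1)).continuousAt.continuousWithinAt
      · intro x hx
        rw [interior_Icc] at hx
        have hx0 : 0 < x := one_pos.trans hx.1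
        rw [(key x hx0).deriv]
        exact mul_pos (Real.rpow_pos_of_pos hx0 _) (by linarith [hx.1])
    exact hmono ⟨le_rfl, h.le⟩ ⟨h.le, le_rfl⟩ h

/-- the β-power divergence between q₀ and c·q₀ equals
    ∑_a q₀(a)^{β+1} ((c^{β+1}−1)/(β+1) − (c^β−1)/β), and the bracketed factor
    is strictly positive for every c > 0 with c ≠ 1, so the β-power divergence
    is not invariant under policy equivalence. -/
theorem beta_divergence_not_policy_invariant
    {𝒜 : Type*} [Fintype 𝒜] [Nonempty 𝒜]
    (β c : ℝ) (hβ0 : β ≠ 0) (hβ1 : β ≠ -1) (hc : 0 < c)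
    (q₀ : 𝒜 → ℝ) (hq₀ : ∀ a, 0 < q₀ a) :
    ((∑ a, ((c * q₀ a) ^ (β + 1) / (β + 1) - q₀ a * (c * q₀ a) ^ β / β))
        - ∑ a, (q₀ a ^ (β + 1) / (β + 1) - q₀ a ^ (β + 1) / β))
      = (∑ a, q₀ a ^ (β + 1)) *
          ((c ^ (β + 1) - 1) / (β + 1) - (c ^ β - 1) / β)
    ∧ (c ≠ 1 → 0 < (c ^ (β + 1) - 1) / (β + 1) - (c ^ β - 1) / β) := by
  have hβ1' : β + 1 ≠ 0 := fun h => hβ1 (by linarith)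
  refine ⟨?_, beta_factor_pos β c hβ0 hβ1' hc⟩
  rw [← Finset.sum_sub_distrib, Finset.sum_mul]
  refine Finset.sum_congr rfl fun a _ => ?_
  have hq := hq₀ a
  rw [Real.mul_rpow hc.le hq.le, Real.mul_rpow hc.le hq.le, Real.rpow_add_one hq.ne']
  ring
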